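/- arXiv:1103.5687 — 2 statements merged into one kernel-verified Lean document; each statement's English description precedes it below -/
import Mathlib

section
/- Let m ≥ 3, n ≥ 1, let Ω ⊆ ℝ^m be open, and let f : Ω → (0,∞) be smooth. Let φ : Ω → ℝ^n be a continuous map such that for every harmonic function u : V → ℝ on an open set V ⊆ ℝ^n with φ⁻¹(V) nonempty, the composition u∘φ is C² on φ⁻¹(V) and satisfies f·Δ(u∘φ) + ⟨∇f, ∇(u∘φ)⟩ = 0 there (i.e., φ is an f-harmonic morphism). Then φ is smooth (C^∞) on Ω. -/
open scoped RealInnerProductSpace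

/-- The Euclidean Laplacian of a real-valued function on `ℝ^m`. -/
noncomputable def lap {m : ℕ} (u : EuclideanSpace ℝ (Fin m) → ℝ)
    (x : EuclideanSpace ℝ (Fin m)) : ℝ :=
  ∑ i : Fin m, fderiv ℝ (fun y => fderiv ℝ u y (EuclideanSpace.single i 1)) x
    (EuclideanSpace.single i 1)

section Regularity

open MeasureTheory FourierTransform Topology

/-- `χ` is of class `C^k` with compact support contained in `Ω`. -/
structure IsCutoff {E : Type*} [NormedAddCommGroup E] [NormedSpace ℝ E]
    (k : WithTop ℕ∞) (Ω : Set E) (χ : E → ℝ) : Prop where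
  contDiff : ContDiff ℝ k χ
  hasCompactSupport : HasCompactSupport χ
  tsupport_subset : tsupport χ ⊆ Ω

namespace IsCutoff

section NormedSpace

variable {E : Type*} [NormedAddCommGroup E] [NormedSpace ℝ E] {k l : WithTop ℕ∞}
  {Ω : Set E} {χ v : E → ℝ}

theorem of_le (h : IsCutoff k Ω χ) (hlk : l ≤ k) : IsCutoff l Ω χ :=
  ⟨h.contDiff.of_le hlk, h.hasCompactSupport, h.tsupport_subset⟩

theorem eq_zero (h : IsCutoff k Ω χ) {x : E} (hx : x ∉ Ω) : χ x = 0 :=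
  image_eq_zero_of_notMem_tsupport fun hx' => hx (h.tsupport_subset hx')

theorem mul (hΩ : IsOpen Ω) (h : IsCutoff k Ω χ) (hv : ContDiffOn ℝ k v Ω) :
    IsCutoff k Ω (fun x => χ x * v x) where
  contDiff := by
    rw [contDiff_iff_contDiffAt]
    intro x
    by_cases hx : x ∈ tsupport χ
    · exact h.contDiff.contDiffAt.mul (hv.contDiffAt (hΩ.mem_nhds (h.tsupport_subset hx)))
    · refine (contDiffAt_const (c := (0 : ℝ))).congr_of_eventuallyEq ?_
      filter_upwards [notMem_tsupport_iff_eventuallyEq.mp hx] with y hy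
      simp [hy]
  hasCompactSupport := h.hasCompactSupport.mul_right
  tsupport_subset := (tsupport_mul_subset_left (f := χ) (g := v)).trans h.tsupport_subset

theorem fderiv_apply (h : IsCutoff k Ω χ) (hlk : l + 1 ≤ k) (e : E) :
    IsCutoff l Ω (fun x => fderiv ℝ χ x e) where
  contDiff := (h.contDiff.fderiv_right hlk).clm_apply contDiff_const
  hasCompactSupport := h.hasCompactSupport.fderiv_apply ℝ e
  tsupport_subset := (tsupport_fderiv_apply_subset ℝ e).trans h.tsupport_subset

theorem integrable [MeasurableSpace E] [BorelSpace E] [FiniteDimensional ℝ E]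
    {μ : Measure E} [IsFiniteMeasureOnCompacts μ] (h : IsCutoff k Ω χ) : Integrable χ μ :=
  h.contDiff.continuous.integrable_of_hasCompactSupport h.hasCompactSupport

end NormedSpace

end IsCutoff

section RealFourier

variable {E : Type*} [NormedAddCommGroup E] [InnerProductSpace ℝ E] [FiniteDimensional ℝ E]
  [MeasurableSpace E] [BorelSpace E]

/-- The Fourier transform of a real-valued function. -/
noncomputable def realFourier (h : E → ℝ) (ξ : E) : ℂ :=
  𝓕 (fun x => (h x : ℂ)) ξ

theorem realFourier_eq (h : E → ℝ) (ξ : E) :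
    realFourier h ξ = ∫ x, Real.fourierChar (-⟪x, ξ⟫) • (h x : ℂ) :=
  Real.fourier_eq _ _

theorem integrable_fourierChar_smul {h : E → ℝ} (hh : Integrable h) (ξ : E) :
    Integrable fun x => Real.fourierChar (-⟪x, ξ⟫) • (h x : ℂ) :=
  (Real.fourierIntegral_convergent_iff ξ).2 hh.ofReal

theorem realFourier_add {g h : E → ℝ} (hg : Integrable g) (hh : Integrable h) (ξ : E) :
    realFourier (fun x => g x + h x) ξ = realFourier g ξ + realFourier h ξ := by
  simp only [realFourier_eq, Complex.ofReal_add, smul_add]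
  exact integral_add (integrable_fourierChar_smul hg ξ) (integrable_fourierChar_smul hh ξ)

theorem realFourier_sub {g h : E → ℝ} (hg : Integrable g) (hh : Integrable h) (ξ : E) :
    realFourier (fun x => g x - h x) ξ = realFourier g ξ - realFourier h ξ := by
  simp only [realFourier_eq, Complex.ofReal_sub, smul_sub]
  exact integral_sub (integrable_fourierChar_smul hg ξ) (integrable_fourierChar_smul hh ξ)

theorem realFourier_sum {ι : Type*} [Fintype ι] {h : ι → E → ℝ} (hh : ∀ i, Integrable (h i))
    (ξ : E) : realFourier (fun x => ∑ i, h i x) ξ = ∑ i, realFourier (h i) ξ := by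
  simp only [realFourier_eq, Complex.ofReal_sum, Finset.smul_sum]
  exact integral_finsetSum _ fun i _ => integrable_fourierChar_smul (hh i) ξ

theorem realFourier_sum_combination {ι : Type*} [Fintype ι] {p q r s : ι → E → ℝ}
    (hp : ∀ i, Integrable (p i)) (hq : ∀ i, Integrable (q i)) (hr : ∀ i, Integrable (r i))
    (hs : ∀ i, Integrable (s i)) (ξ : E) :
    realFourier (fun x => ∑ i, (2 * p i x - q i x + r i x - s i x)) ξ =
      ∑ i, (2 * realFourier (p i) ξ - realFourier (q i) ξ + realFourier (r i) ξ
        - realFourier (s i) ξ) := by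
  have h₁ : ∀ i, Integrable fun x => 2 * p i x := fun i => (hp i).const_mul 2
  have h₂ : ∀ i, Integrable fun x => 2 * p i x - q i x := fun i => (h₁ i).sub (hq i)
  have h₃ : ∀ i, Integrable fun x => 2 * p i x - q i x + r i x := fun i => (h₂ i).add (hr i)
  rw [realFourier_sum fun i => show Integrable fun x => 2 * p i x - q i x + r i x - s i x from
    (h₃ i).sub (hs i)]
  refine Finset.sum_congr rfl fun i _ => ?_
  rw [realFourier_sub (h₃ i) (hs i), realFourier_add (h₂ i) (hr i),
    realFourier_sub (h₁ i) (hq i)]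
  simp only [two_mul]
  rw [realFourier_add (hp i) (hp i)]

theorem norm_realFourier_le (h : E → ℝ) (ξ : E) : ‖realFourier h ξ‖ ≤ ∫ x, ‖h x‖ := by
  refine (VectorFourier.norm_fourierIntegral_le_integral_norm _ _ _ _ _).trans_eq ?_
  simp

theorem realFourier_fderiv_apply {Ω : Set E} {h : E → ℝ} (hh : IsCutoff 1 Ω h) (e ξ : E) :
    realFourier (fun x => fderiv ℝ h x e) ξ =
      2 * Real.pi * Complex.I * (⟪ξ, e⟫ : ℝ) * realFourier h ξ := by
  have hfd : ∀ x, HasFDerivAt (fun x => (h x : ℂ)) (Complex.ofRealCLM.comp (fderiv ℝ h x)) x :=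
    fun x => Complex.ofRealCLM.hasFDerivAt.comp x
      (hh.contDiff.differentiable one_ne_zero x).hasFDerivAt
  have hfd' : fderiv ℝ (fun x => (h x : ℂ)) = fun x => Complex.ofRealCLM.comp (fderiv ℝ h x) :=
    funext fun x => (hfd x).fderiv
  have hcont : ContDiff ℝ 1 (fun x => (h x : ℂ)) := Complex.ofRealCLM.contDiff.comp hh.contDiff
  have hcs : HasCompactSupport (fun x => (h x : ℂ)) :=
    hh.hasCompactSupport.comp_left (g := fun r : ℝ => (r : ℂ)) Complex.ofReal_zero
  have hint : Integrable (fderiv ℝ (fun x => (h x : ℂ))) :=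
    (hcont.continuous_fderiv one_ne_zero).integrable_of_hasCompactSupport (hcs.fderiv ℝ)
  have key := congrArg (fun F => F ξ e)
    (Real.fourier_fderiv (V := E) hh.integrable.ofReal (fun x => (hfd x).differentiableAt) hint)
  simp only [Real.fourier_continuousLinearMap_apply hint] at key
  rw [hfd'] at key
  have hinner : innerSL ℝ ξ e = ⟪ξ, e⟫ := rfl
  simpa [realFourier, VectorFourier.fourierSMulRight_apply, mul_assoc, hinner] using key

theorem contDiff_of_realFourier_decay {h : E → ℝ} (hc : Continuous h) (hi : Integrable h)
    (hd : ∀ k : ℕ, ∃ C, ∀ ξ, ‖ξ‖ ^ k * ‖realFourier h ξ‖ ≤ C) :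
    ContDiff ℝ (⊤ : ℕ∞) h := by
  let F : E → ℂ := realFourier h
  have hFc : Continuous F := VectorFourier.fourierIntegral_continuous Real.continuous_fourierChar
    (by exact continuous_inner) hi.ofReal
  have hmom : ∀ k : ℕ, Integrable fun ξ => ‖ξ‖ ^ k * ‖F ξ‖ := by
    intro k
    obtain ⟨C₁, h₁⟩ : ∃ C, ∀ ξ, ‖F ξ‖ ≤ C := by simpa only [pow_zero, one_mul] using hd 0
    obtain ⟨C₂, h₂⟩ := hd (k + (volume : Measure E).integrablePower)
    exact integrable_of_le_of_pow_mul_le h₁ h₂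
      hFc.aestronglyMeasurable
  have hFi : Integrable F := by
    rw [← integrable_norm_iff hFc.aestronglyMeasurable]
    simpa using hmom 0
  have hinv : 𝓕⁻ F = fun x => (h x : ℂ) :=
    Continuous.fourierInv_fourier_eq (Complex.continuous_ofReal.comp hc) hi.ofReal hFi
  have hsm : ContDiff ℝ (⊤ : ℕ∞) (fun x => (h x : ℂ)) := by
    rw [← hinv]
    have : 𝓕⁻ F = fun x => 𝓕 F (-x) := funext fun x => Real.fourierInv_eq_fourier_neg F x
    rw [this]
    exact (Real.contDiff_fourier (fun n _ => hmom n)).comp contDiff_neg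
  exact Complex.reCLM.contDiff.comp hsm

end RealFourier

theorem fderiv_mul_apply {E : Type*} [NormedAddCommGroup E] [NormedSpace ℝ E] {g h : E → ℝ}
    {x : E} (hg : DifferentiableAt ℝ g x) (hh : DifferentiableAt ℝ h x) (e : E) :
    fderiv ℝ (fun y => g y * h y) x e = fderiv ℝ g x e * h x + g x * fderiv ℝ h x e := by
  rw [fderiv_fun_mul hg hh]
  simp
  ring

section Elliptic

variable {ι E : Type*} [Fintype ι] [NormedAddCommGroup E] [InnerProductSpace ℝ E]
  {Ω : Set E} {b : ι → E → ℝ} {v χ : E → ℝ}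

/-- If `Δ v + ∑ i, b i * ∂ᵢ v = 0`, then `Δ (χ v)` is a combination of functions `ψ v` and
`∂ᵢ (ψ v)` with cutoffs `ψ`. -/
theorem sum_fderiv_fderiv_cutoff_mul (e : ι → E) (hΩ : IsOpen Ω)
    (hb : ∀ i, ContDiffOn ℝ (⊤ : ℕ∞) (b i) Ω) (hv : ContDiffOn ℝ 2 v Ω)
    (hPDE : ∀ x ∈ Ω, ∑ i, (fderiv ℝ (fun y => fderiv ℝ v y (e i)) x (e i) +
      b i x * fderiv ℝ v x (e i)) = 0)
    (hχ : IsCutoff (⊤ : ℕ∞) Ω χ) (x : E) :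
    ∑ i, fderiv ℝ (fun y => fderiv ℝ (fun z => χ z * v z) y (e i)) x (e i) =
      ∑ i, (2 * fderiv ℝ (fun y => fderiv ℝ χ y (e i) * v y) x (e i)
        - fderiv ℝ (fun y => χ y * b i y * v y) x (e i)
        + fderiv ℝ (fun y => χ y * b i y) x (e i) * v x
        - fderiv ℝ (fun y => fderiv ℝ χ y (e i)) x (e i) * v x) := by
  have hα : ∀ i, IsCutoff (⊤ : ℕ∞) Ω (fun y => fderiv ℝ χ y (e i)) :=
    fun i => hχ.fderiv_apply (by simp) (e i)
  have hβ : ∀ i, IsCutoff (⊤ : ℕ∞) Ω (fun y => χ y * b i y) := fun i => hχ.mul hΩ (hb i)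
  have h2 : (2 : WithTop ℕ∞) ≤ ((⊤ : ℕ∞) : WithTop ℕ∞) :=
    WithTop.coe_le_coe.2 (le_top (a := (2 : ℕ∞)))
  by_cases hx : x ∈ Ω
  · have hv2 : ∀ y ∈ Ω, ContDiffAt ℝ 2 v y := fun y hy => hv.contDiffAt (hΩ.mem_nhds hy)
    have hvd : ∀ y ∈ Ω, DifferentiableAt ℝ v y :=
      fun y hy => (hv2 y hy).differentiableAt two_ne_zero
    have hdv : ∀ i, DifferentiableAt ℝ (fun y => fderiv ℝ v y (e i)) x := fun i =>
      (((hv2 x hx).fderiv_right (m := 1) (by norm_num)).clm_apply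
        contDiffAt_const).differentiableAt one_ne_zero
    have hd : ∀ {ψ : E → ℝ}, IsCutoff (⊤ : ℕ∞) Ω ψ → Differentiable ℝ ψ :=
      fun h => h.contDiff.differentiable (by simp)
    have hsecond : ∀ i, fderiv ℝ (fun y => fderiv ℝ (fun z => χ z * v z) y (e i)) x (e i) =
        fderiv ℝ (fun y => fderiv ℝ χ y (e i)) x (e i) * v x
          + 2 * (fderiv ℝ χ x (e i) * fderiv ℝ v x (e i))
          + χ x * fderiv ℝ (fun y => fderiv ℝ v y (e i)) x (e i) := by
      intro i
      have hev : (fun y => fderiv ℝ (fun z => χ z * v z) y (e i)) =ᶠ[𝓝 x]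
          fun y => fderiv ℝ χ y (e i) * v y + χ y * fderiv ℝ v y (e i) := by
        filter_upwards [hΩ.mem_nhds hx] with y hy
        exact fderiv_mul_apply (hd hχ y) (hvd y hy) (e i)
      rw [hev.fderiv_eq, fderiv_fun_add ((hd (hα i) x).fun_mul (hvd x hx))
          ((hd hχ x).fun_mul (hdv i)),
        add_apply, fderiv_mul_apply (hd (hα i) x) (hvd x hx),
        fderiv_mul_apply (hd hχ x) (hdv i)]
      ring
    rw [← sub_eq_zero, ← Finset.sum_sub_distrib, ← mul_zero (χ x), ← hPDE x hx, Finset.mul_sum]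
    refine Finset.sum_congr rfl fun i _ => ?_
    rw [hsecond, fderiv_mul_apply (hd (hα i) x) (hvd x hx),
      fderiv_mul_apply (hd (hβ i) x) (hvd x hx)]
    ring
  · have hl : ∀ i, fderiv ℝ (fun y => fderiv ℝ (fun z => χ z * v z) y (e i)) x (e i) = 0 :=
      fun i => ((((hχ.of_le h2).mul hΩ hv).fderiv_apply (l := 1) (by norm_num) (e i)).fderiv_apply
        (l := 0) (by norm_num) (e i)).eq_zero hx
    have hα' : ∀ i, fderiv ℝ (fun y => fderiv ℝ χ y (e i) * v y) x (e i) = 0 := fun i =>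
      ((((hα i).of_le h2).mul hΩ hv).fderiv_apply (l := 1) (by norm_num) (e i)).eq_zero hx
    have hβ' : ∀ i, fderiv ℝ (fun y => χ y * b i y * v y) x (e i) = 0 := fun i =>
      ((((hβ i).of_le h2).mul hΩ hv).fderiv_apply (l := 1) (by norm_num) (e i)).eq_zero hx
    have hγ : ∀ i, fderiv ℝ (fun y => χ y * b i y) x (e i) = 0 := fun i =>
      ((hβ i).fderiv_apply (l := (⊤ : ℕ∞)) (by simp) (e i)).eq_zero hx
    have hδ : ∀ i, fderiv ℝ (fun y => fderiv ℝ χ y (e i)) x (e i) = 0 := fun i =>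
      ((hα i).fderiv_apply (l := (⊤ : ℕ∞)) (by simp) (e i)).eq_zero hx
    simp only [hl, hα', hβ', hγ, hδ]
    simp

variable [FiniteDimensional ℝ E] [MeasurableSpace E] [BorelSpace E]

theorem norm_sq_mul_realFourier_le (e : OrthonormalBasis ι ℝ E) (hΩ : IsOpen Ω)
    (hb : ∀ i, ContDiffOn ℝ (⊤ : ℕ∞) (b i) Ω) (hv : ContDiffOn ℝ 2 v Ω)
    (hPDE : ∀ x ∈ Ω, ∑ i, (fderiv ℝ (fun y => fderiv ℝ v y (e i)) x (e i) +
      b i x * fderiv ℝ v x (e i)) = 0)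
    (hχ : IsCutoff (⊤ : ℕ∞) Ω χ) (ξ : E) :
    (2 * Real.pi) ^ 2 * ‖ξ‖ ^ 2 * ‖realFourier (fun x => χ x * v x) ξ‖ ≤
      ∑ i, (2 * (2 * Real.pi * ‖ξ‖ * ‖realFourier (fun x => fderiv ℝ χ x (e i) * v x) ξ‖)
        + 2 * Real.pi * ‖ξ‖ * ‖realFourier (fun x => χ x * b i x * v x) ξ‖
        + ‖realFourier (fun x => fderiv ℝ (fun y => χ y * b i y) x (e i) * v x) ξ‖
        + ‖realFourier (fun x => fderiv ℝ (fun y => fderiv ℝ χ y (e i)) x (e i) * v x) ξ‖) := by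
  have h2 : (2 : WithTop ℕ∞) ≤ ((⊤ : ℕ∞) : WithTop ℕ∞) :=
    WithTop.coe_le_coe.2 (le_top (a := (2 : ℕ∞)))
  have hmul : ∀ {ψ : E → ℝ}, IsCutoff (⊤ : ℕ∞) Ω ψ → IsCutoff 2 Ω (fun x => ψ x * v x) :=
    fun h => (h.of_le h2).mul hΩ hv
  have h12 : (1 : WithTop ℕ∞) ≤ 2 := by norm_num
  have hα : ∀ i, IsCutoff (⊤ : ℕ∞) Ω (fun y => fderiv ℝ χ y (e i)) :=
    fun i => hχ.fderiv_apply (by simp) (e i)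
  have hβ : ∀ i, IsCutoff (⊤ : ℕ∞) Ω (fun y => χ y * b i y) := fun i => hχ.mul hΩ (hb i)
  have hγ : ∀ i, IsCutoff (⊤ : ℕ∞) Ω (fun x => fderiv ℝ (fun y => χ y * b i y) x (e i)) :=
    fun i => (hβ i).fderiv_apply (by simp) (e i)
  have hδ : ∀ i, IsCutoff (⊤ : ℕ∞) Ω
      (fun x => fderiv ℝ (fun y => fderiv ℝ χ y (e i)) x (e i)) :=
    fun i => (hα i).fderiv_apply (by simp) (e i)
  have hD : ∀ {ψ : E → ℝ} (i : ι), IsCutoff 2 Ω ψ →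
      IsCutoff 1 Ω (fun x => fderiv ℝ ψ x (e i)) :=
    fun i h => h.fderiv_apply (by norm_num) (e i)
  have hF : ∀ {ψ : E → ℝ} (i : ι), IsCutoff 1 Ω ψ →
      realFourier (fun x => fderiv ℝ ψ x (e i)) ξ =
        2 * Real.pi * Complex.I * (⟪ξ, e i⟫ : ℝ) * realFourier ψ ξ :=
    fun i h => realFourier_fderiv_apply h (e i) ξ
  have hI : ∀ {ψ : E → ℝ} (i : ι), IsCutoff 2 Ω ψ →
      Integrable (fun x => fderiv ℝ ψ x (e i)) := fun i h => (hD i h).integrable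
  have hL : realFourier (fun x => ∑ i, fderiv ℝ (fun y =>
      fderiv ℝ (fun z => χ z * v z) y (e i)) x (e i)) ξ =
      -((2 * Real.pi) ^ 2 * ‖ξ‖ ^ 2 : ℝ) * realFourier (fun x => χ x * v x) ξ := by
    rw [realFourier_sum fun i => ((hD i (hmul hχ)).fderiv_apply (l := 0)
      (by norm_num) (e i)).integrable]
    have hsum : ∑ i, ⟪ξ, e i⟫ ^ 2 = ‖ξ‖ ^ 2 := by
      simpa using e.sum_sq_norm_inner_left ξ
    rw [← hsum]
    push_cast
    rw [Finset.mul_sum, ← Finset.sum_neg_distrib, Finset.sum_mul]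
    refine Finset.sum_congr rfl fun i _ => ?_
    rw [hF i (hD i (hmul hχ)), hF i ((hmul hχ).of_le h12)]
    linear_combination (2 * Real.pi * (⟪ξ, e i⟫ : ℝ)) ^ 2 *
      realFourier (fun x => χ x * v x) ξ * Complex.I_sq
  have hR := congrFun (congrArg realFourier (funext
    (sum_fderiv_fderiv_cutoff_mul e hΩ hb hv hPDE hχ))) ξ
  rw [hL] at hR
  replace hR := hR.trans (realFourier_sum_combination (fun i => hI i (hmul (hα i)))
    (fun i => hI i (hmul (hβ i))) (fun i => (hmul (hγ i)).integrable)
    (fun i => (hmul (hδ i)).integrable) ξ)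
  have hnorm := congrArg norm hR
  rw [norm_mul, norm_neg, Complex.norm_real, Real.norm_of_nonneg (by positivity)] at hnorm
  rw [hnorm]
  refine (norm_sum_le _ _).trans (Finset.sum_le_sum fun i _ => ?_)
  have hbound : ∀ {ψ : E → ℝ}, IsCutoff 1 Ω ψ → ‖realFourier (fun x => fderiv ℝ ψ x (e i)) ξ‖ ≤
      2 * Real.pi * ‖ξ‖ * ‖realFourier ψ ξ‖ := by
    intro ψ hψ
    rw [hF i hψ, norm_mul, norm_mul, norm_mul, Complex.norm_I, Complex.norm_real, mul_one]
    have h1 : ‖⟪ξ, e i⟫‖ ≤ ‖ξ‖ := by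
      simpa using norm_inner_le_norm (𝕜 := ℝ) ξ (e i)
    have h3 : ‖(2 * Real.pi : ℂ)‖ = 2 * Real.pi := by
      simp [abs_of_pos Real.pi_pos]
    rw [h3]
    gcongr
  refine (norm_sub_le _ _).trans <| add_le_add ?_ le_rfl
  refine (norm_add_le _ _).trans <| add_le_add ?_ le_rfl
  refine (norm_sub_le _ _).trans <| add_le_add ?_ ?_
  · rw [norm_mul, Complex.norm_two]
    exact mul_le_mul_of_nonneg_left (hbound ((hmul (hα i)).of_le h12)) zero_le_two
  · exact hbound ((hmul (hβ i)).of_le h12)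

theorem realFourier_cutoff_mul_decay (e : OrthonormalBasis ι ℝ E) (hΩ : IsOpen Ω)
    (hb : ∀ i, ContDiffOn ℝ (⊤ : ℕ∞) (b i) Ω) (hv : ContDiffOn ℝ 2 v Ω)
    (hPDE : ∀ x ∈ Ω, ∑ i, (fderiv ℝ (fun y => fderiv ℝ v y (e i)) x (e i) +
      b i x * fderiv ℝ v x (e i)) = 0)
    (k : ℕ) : ∀ χ : E → ℝ, IsCutoff (⊤ : ℕ∞) Ω χ →
      ∃ C, ∀ ξ, ‖ξ‖ ^ k * ‖realFourier (fun x => χ x * v x) ξ‖ ≤ C := by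
  induction k with
  | zero =>
    intro χ _
    exact ⟨_, fun ξ => by simpa only [pow_zero, one_mul] using norm_realFourier_le _ ξ⟩
  | succ k ih =>
    intro χ hχ
    have hα : ∀ i, IsCutoff (⊤ : ℕ∞) Ω (fun y => fderiv ℝ χ y (e i)) :=
      fun i => hχ.fderiv_apply (by simp) (e i)
    have hβ : ∀ i, IsCutoff (⊤ : ℕ∞) Ω (fun y => χ y * b i y) := fun i => hχ.mul hΩ (hb i)
    choose A hA using fun i => ih _ (hα i)
    choose B hB using fun i => ih _ (hβ i)
    choose G hG using fun i => ih _ ((hβ i).fderiv_apply (l := (⊤ : ℕ∞)) (by simp) (e i))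
    choose D hD using fun i => ih _ ((hα i).fderiv_apply (l := (⊤ : ℕ∞)) (by simp) (e i))
    set K : ℝ := ∑ i, (2 * (2 * Real.pi * A i) + 2 * Real.pi * B i + G i + D i) with hK
    set C₀ : ℝ := ∫ x, ‖χ x * v x‖
    refine ⟨max C₀ K, fun ξ => ?_⟩
    set w : ℝ := ‖realFourier (fun x => χ x * v x) ξ‖
    have hw0 : 0 ≤ w := norm_nonneg _
    rcases le_total ‖ξ‖ 1 with hξ | hξ
    · refine le_trans ?_ (le_max_left _ _)
      calc ‖ξ‖ ^ (k + 1) * w ≤ 1 * w := by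
            gcongr
            exact pow_le_one₀ (norm_nonneg _) hξ
        _ ≤ C₀ := by rw [one_mul]; exact norm_realFourier_le _ ξ
    · refine le_trans ?_ (le_max_right _ _)
      have hle := mul_le_mul_of_nonneg_left
        (norm_sq_mul_realFourier_le e hΩ hb hv hPDE hχ ξ) (pow_nonneg (norm_nonneg ξ) k)
      have hsum : ‖ξ‖ * (‖ξ‖ ^ (k + 1) * w) ≤ ‖ξ‖ * K := by
        have hpi : 1 ≤ (2 * Real.pi) ^ 2 := by nlinarith [Real.pi_gt_three]
        calc ‖ξ‖ * (‖ξ‖ ^ (k + 1) * w) ≤ (2 * Real.pi) ^ 2 * (‖ξ‖ * (‖ξ‖ ^ (k + 1) * w)) :=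
              le_mul_of_one_le_left (by positivity) hpi
          _ = ‖ξ‖ ^ k * ((2 * Real.pi) ^ 2 * ‖ξ‖ ^ 2 * w) := by ring
          _ ≤ _ := hle
          _ ≤ ‖ξ‖ * K := by
            rw [hK, Finset.mul_sum, Finset.mul_sum]
            refine Finset.sum_le_sum fun i _ => ?_
            have hξ0 : 0 ≤ ‖ξ‖ := norm_nonneg ξ
            have h1 := mul_le_mul_of_nonneg_left (hA i ξ)
              (by positivity : 0 ≤ 2 * (2 * Real.pi * ‖ξ‖))
            have h2 := mul_le_mul_of_nonneg_left (hB i ξ)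
              (by positivity : 0 ≤ 2 * Real.pi * ‖ξ‖)
            have h3 := (hG i ξ).trans
              (le_mul_of_one_le_left (le_trans (by positivity) (hG i ξ)) hξ)
            have h4 := (hD i ξ).trans
              (le_mul_of_one_le_left (le_trans (by positivity) (hD i ξ)) hξ)
            linarith
      exact le_of_mul_le_mul_left hsum (by linarith)

/-- Interior regularity: a `C^2` solution of `Δ v + ∑ i, b i * ∂ᵢ v = 0` with smooth coefficients
is smooth. -/
theorem contDiffOn_of_laplacian_add_drift_eq_zero (e : OrthonormalBasis ι ℝ E) (hΩ : IsOpen Ω)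
    (hb : ∀ i, ContDiffOn ℝ (⊤ : ℕ∞) (b i) Ω) (hv : ContDiffOn ℝ 2 v Ω)
    (hPDE : ∀ x ∈ Ω, ∑ i, (fderiv ℝ (fun y => fderiv ℝ v y (e i)) x (e i) +
      b i x * fderiv ℝ v x (e i)) = 0) :
    ContDiffOn ℝ (⊤ : ℕ∞) v Ω := by
  intro x hx
  obtain ⟨R, hR, hRΩ⟩ := Metric.isOpen_iff.mp hΩ x hx
  let η : ContDiffBump x := ⟨R / 4, R / 2, by positivity, by linarith⟩
  have hη : IsCutoff (⊤ : ℕ∞) Ω η := by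
    refine ⟨η.contDiff, η.hasCompactSupport, ?_⟩
    rw [η.tsupport_eq]
    exact (Metric.closedBall_subset_ball (by simp only [η]; linarith)).trans hRΩ
  have hηv := (hη.of_le (l := 2) (WithTop.coe_le_coe.2 (le_top (a := (2 : ℕ∞))))).mul hΩ hv
  have hsm := contDiff_of_realFourier_decay hηv.contDiff.continuous hηv.integrable
    fun k => realFourier_cutoff_mul_decay e hΩ hb hv hPDE k η hη
  refine (hsm.contDiffAt.congr_of_eventuallyEq ?_).contDiffWithinAt
  filter_upwards [η.eventuallyEq_one] with y hy
  simp [hy]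

end Elliptic

end Regularity

/-- Regularity: for `m ≥ 3`, an `f`-harmonic morphism is smooth. -/
theorem stmt9 {m n : ℕ} (hm : 3 ≤ m) (hn : 1 ≤ n)
    (Ω : Set (EuclideanSpace ℝ (Fin m))) (hΩ : IsOpen Ω)
    (f : EuclideanSpace ℝ (Fin m) → ℝ) (hf : ContDiffOn ℝ (⊤ : ℕ∞) f Ω)
    (hfpos : ∀ x ∈ Ω, 0 < f x)
    (φ : EuclideanSpace ℝ (Fin m) → EuclideanSpace ℝ (Fin n))
    (hφc : ContinuousOn φ Ω)
    -- `φ` is an `f`-harmonic morphism: it pulls back harmonic functions to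
    -- `f`-harmonic functions
    (hmor : ∀ V : Set (EuclideanSpace ℝ (Fin n)), IsOpen V →
      ∀ u : EuclideanSpace ℝ (Fin n) → ℝ, ContDiffOn ℝ 2 u V →
      (∀ y ∈ V, lap u y = 0) →
      (Ω ∩ φ ⁻¹' V).Nonempty →
      ContDiffOn ℝ 2 (fun y => u (φ y)) (Ω ∩ φ ⁻¹' V) ∧
      ∀ x ∈ Ω ∩ φ ⁻¹' V,
        f x * lap (fun y => u (φ y)) x +
          ⟪gradient f x, gradient (fun y => u (φ y)) x⟫ = 0) :
    -- then `φ` is smooth on `Ω`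
    ContDiffOn ℝ (⊤ : ℕ∞) φ Ω := by
  rcases Ω.eq_empty_or_nonempty with rfl | hne
  · exact contDiffOn_empty
  rw [contDiffOn_euclidean]
  intro j
  have hcoord : ∀ y, fderiv ℝ (fun y : EuclideanSpace ℝ (Fin n) => y j) y =
      EuclideanSpace.proj j := fun y => (EuclideanSpace.proj (𝕜 := ℝ) j).fderiv
  obtain ⟨hv, hPDE⟩ := hmor Set.univ isOpen_univ (fun y => y j)
    (EuclideanSpace.proj (𝕜 := ℝ) j).contDiff.contDiffOn
    (fun y _ => by simp [lap, hcoord]) (by simpa using hne)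
  simp only [Set.preimage_univ, Set.inter_univ] at hv hPDE
  have hfd : ∀ i : Fin m, ContDiffOn ℝ (⊤ : ℕ∞)
      (fun x => fderiv ℝ f x (EuclideanSpace.single i 1)) Ω := fun i =>
    (hf.fderiv_of_isOpen hΩ (by simp)).clm_apply contDiffOn_const
  refine contDiffOn_of_laplacian_add_drift_eq_zero (EuclideanSpace.basisFun (Fin m) ℝ) hΩ
    (b := fun i x => fderiv ℝ f x (EuclideanSpace.single i 1) / f x)
    (fun i => (hfd i).div hf fun x hx => (hfpos x hx).ne') hv fun x hx => ?_
  have hfx := (hfpos x hx).ne'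
  have h := hPDE x hx
  rw [← (EuclideanSpace.basisFun (Fin m) ℝ).sum_inner_mul_inner] at h
  simp only [inner_gradient_left, inner_gradient_right, EuclideanSpace.basisFun_apply,
    conj_trivial, lap] at h
  simp only [EuclideanSpace.basisFun_apply]
  rw [← mul_right_inj' hfx, mul_zero, ← h, Finset.mul_sum, Finset.mul_sum,
    ← Finset.sum_add_distrib]
  refine Finset.sum_congr rfl fun i _ => ?_
  field_simp
end

section
/- Let m > n ≥ 2, let f : ℝ^m → (0,∞) be smooth, and let φ = (φ¹,…,φⁿ) : ℝ^m → ℝ^n be a map each of whose components is a polynomial. Then φ is an f-harmonic morphism (for every harmonic function u : V → ℝ on an open V ⊆ ℝ^n with φ⁻¹(V) nonempty, u∘φ is f-harmonic on φ⁻¹(V)) if and only if φ is a harmonic morphism (for every harmonic u : V → ℝ on an open V ⊆ ℝ^n, u∘φ is harmonic on φ⁻¹(V)) and the gradient of f is vertical, i.e., Dφ_x(∇f(x)) = 0 for every x ∈ ℝ^m. -/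
open scoped RealInnerProductSpace

open MvPolynomial in
/-- A derivation of a polynomial ring whose square kills every variable is locally nilpotent. -/
theorem Derivation.exists_iterate_eq_zero_of_apply_apply_X {σ R : Type*} [CommRing R]
    (D : Derivation R (MvPolynomial σ R) (MvPolynomial σ R)) (hD : ∀ i, D (D (X i)) = 0)
    (p : MvPolynomial σ R) : ∃ N : ℕ, D^[N] p = 0 := by
  have hzero : ∀ k : ℕ, D^[k] 0 = 0 := fun k => iterate_map_zero D k
  have hmono : ∀ {N k : ℕ} {q : MvPolynomial σ R}, D^[N] q = 0 → N ≤ k → D^[k] q = 0 := by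
    intro N k q h hk
    obtain ⟨l, rfl⟩ := Nat.exists_eq_add_of_le' hk
    rw [Function.iterate_add_apply, h, hzero]
  induction p using MvPolynomial.induction_on with
  | C a => exact ⟨1, by simp⟩
  | add p q hp hq =>
    obtain ⟨N, hN⟩ := hp
    obtain ⟨M, hM⟩ := hq
    refine ⟨max N M, ?_⟩
    rw [iterate_map_add, hmono hN (le_max_left _ _), hmono hM (le_max_right _ _), add_zero]
  | mul_X p i hp =>
    obtain ⟨N, hN⟩ := hp
    have hconst : ∀ (k : ℕ) (q : MvPolynomial σ R), D^[k] (q * D (X i)) = D^[k] q * D (X i) := by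
      intro k
      induction k with
      | zero => simp
      | succ k ih =>
        intro q
        rw [Function.iterate_succ_apply, Function.iterate_succ_apply, ← ih]
        simp [hD, mul_comm]
    refine ⟨N + 1, ?_⟩
    induction N generalizing p with
    | zero => simp_all
    | succ N ih =>
      rw [Function.iterate_succ_apply] at hN
      rw [Function.iterate_succ_apply, Derivation.leibniz, iterate_map_add, smul_eq_mul,
        smul_eq_mul, hconst, Function.iterate_succ_apply, hN, mul_comm (X i), ih _ hN]
      simp

/-- A matrix solving the Riccati equation `D H = -H ^ 2` for a derivation `D` that is nilpotent on
its entries is nilpotent. -/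
theorem Matrix.isNilpotent_of_derivation_eq_neg_sq {ι k A : Type*} [Fintype ι] [DecidableEq ι]
    [Field k] [CharZero k] [CommRing A] [Algebra k A] (D : Derivation k A A) (H : Matrix ι ι A)
    (hH : ∀ i j, D (H i j) = -(H * H) i j) (hD : ∀ a, ∃ N : ℕ, D^[N] a = 0) :
    IsNilpotent H := by
  have hpow : ∀ (r : ℕ) (i j : ι), D ((H ^ (r + 1)) i j) = -((r : A) + 1) * (H ^ (r + 2)) i j := by
    intro r
    induction r with
    | zero => intro i j; simp [hH, pow_two]
    | succ r ih =>
      intro i j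
      have h₁ : (H ^ (r + 1 + 2)) i j = ∑ l, (H ^ (r + 2)) i l * H l j := by
        rw [show r + 1 + 2 = (r + 2) + 1 from rfl, pow_succ, Matrix.mul_apply]
      have h₂ : (H ^ (r + 1 + 2)) i j = ∑ l, (H ^ (r + 1)) i l * (H * H) l j := by
        rw [pow_add H (r + 1) 2, Matrix.mul_apply, pow_two]
      rw [pow_succ, Matrix.mul_apply, map_sum]
      simp only [Derivation.leibniz, smul_eq_mul, hH, ih, Finset.sum_add_distrib]
      have h₃ : ∑ l, (H ^ (r + 1)) i l * -(H * H) l j = -(H ^ (r + 1 + 2)) i j := by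
        simp [h₂]
      have h₄ : ∑ l, H l j * (-((r : A) + 1) * (H ^ (r + 2)) i l)
          = -((r : A) + 1) * (H ^ (r + 1 + 2)) i j := by
        rw [h₁, Finset.mul_sum]
        exact Finset.sum_congr rfl fun l _ => by ring
      rw [h₃, h₄]
      push_cast
      ring
  have hiter : ∀ (r : ℕ) (i j : ι),
      D^[r] (H i j) = algebraMap k A ((-1) ^ r * r.factorial) * (H ^ (r + 1)) i j := by
    intro r
    induction r with
    | zero => simp
    | succ r ih =>
      intro i j
      rw [Function.iterate_succ_apply', ih, Derivation.leibniz, Derivation.map_algebraMap,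
        smul_zero, add_zero, smul_eq_mul, hpow, Nat.factorial_succ]
      push_cast [map_mul, map_pow, map_neg, map_natCast]
      simp
      ring
  have hentry : ∀ i j, ∃ N : ℕ, ∀ r ≥ N, (H ^ (r + 1)) i j = 0 := by
    intro i j
    obtain ⟨N, hN⟩ := hD (H i j)
    refine ⟨N, fun r hr => ?_⟩
    obtain ⟨l, rfl⟩ := Nat.exists_eq_add_of_le' hr
    have h := hiter (l + N) i j
    rw [Function.iterate_add_apply, hN, iterate_map_zero] at h
    have hu : IsUnit (algebraMap k A ((-1) ^ (l + N) * (l + N).factorial)) :=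
      (IsUnit.mk0 _ (mul_ne_zero (by simp) (by exact_mod_cast Nat.factorial_ne_zero _))).map _
    exact (hu.mul_right_eq_zero).1 h.symm
  choose N hN using hentry
  refine ⟨(∑ i, ∑ j, N i j) + 1, ?_⟩
  ext i j
  refine hN i j _ ?_
  exact (Finset.single_le_sum (f := fun j => N i j) (fun _ _ => Nat.zero_le _)
    (Finset.mem_univ j)).trans
    (Finset.single_le_sum (f := fun i => ∑ j, N i j) (fun _ _ => Nat.zero_le _)
    (Finset.mem_univ i))

namespace MvPolynomial

variable {σ k : Type*}

theorem pderiv_comm [CommSemiring k] (i j : σ) (p : MvPolynomial σ k) :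
    pderiv i (pderiv j p) = pderiv j (pderiv i p) := by
  classical
  induction p using MvPolynomial.induction_on with
  | C a => simp
  | add p q hp hq => simp [hp, hq]
  | mul_X p l hp =>
    simp only [Derivation.leibniz, smul_eq_mul, map_add, pderiv_X, hp, Pi.single_apply]
    split_ifs <;> simp <;> ring

/-- A polynomial solution of the eikonal equation `∑ (∂ᵢ P) ^ 2 = 0` is harmonic. -/
theorem sum_pderiv_pderiv_eq_zero_of_sum_sq [Fintype σ] [Field k] [CharZero k]
    (P : MvPolynomial σ k) (hP : ∑ i, pderiv i P ^ 2 = 0) :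
    ∑ i, pderiv i (pderiv i P) = 0 := by
  classical
  have hgrad : ∀ j, ∑ i, pderiv i P * pderiv j (pderiv i P) = 0 := by
    intro j
    have h := congrArg (pderiv j) hP
    simp only [map_sum, map_zero, Derivation.leibniz_pow] at h
    have h' : (2 : MvPolynomial σ k) * ∑ i, pderiv i P * pderiv j (pderiv i P) = 0 := by
      rw [← h, Finset.mul_sum]
      exact Finset.sum_congr rfl fun i _ => by simp
    exact (mul_eq_zero.1 h').resolve_left two_ne_zero
  let D : Derivation k (MvPolynomial σ k) (MvPolynomial σ k) := ∑ i, pderiv i P • pderiv i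
  have hDapply : ∀ q, D q = ∑ i, pderiv i P * pderiv i q := by
    intro q
    refine (congrFun (map_sum (Derivation.coeFnAddMonoidHom
      (R := k) (A := MvPolynomial σ k) (M := MvPolynomial σ k))
      (fun i => pderiv i P • pderiv i) Finset.univ) q).trans ?_
    rw [Finset.sum_apply]
    rfl
  have hDX : ∀ j, D (X j) = pderiv j P := by
    intro j
    simp [hDapply, pderiv_X, Pi.single_apply]
  have hDD : ∀ j, D (D (X j)) = 0 := by
    intro j
    rw [hDX, hDapply, ← hgrad j]
    exact Finset.sum_congr rfl fun i _ => by rw [pderiv_comm]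
  let H : Matrix σ σ (MvPolynomial σ k) := Matrix.of fun i j => pderiv i (pderiv j P)
  have hH : ∀ i j, D (H i j) = -(H * H) i j := by
    intro i j
    have h := congrArg (pderiv i) (hgrad j)
    simp only [map_sum, map_zero, Derivation.leibniz, smul_eq_mul, Finset.sum_add_distrib] at h
    have h₁ : D (H i j) = ∑ l, pderiv l P * pderiv i (pderiv j (pderiv l P)) := by
      rw [hDapply]
      refine Finset.sum_congr rfl fun l _ => ?_
      rw [pderiv_comm j l, pderiv_comm i l]
      rfl
    have h₂ : (H * H) i j = ∑ l, pderiv j (pderiv l P) * pderiv i (pderiv l P) := by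
      rw [Matrix.mul_apply]
      refine Finset.sum_congr rfl fun l _ => ?_
      rw [pderiv_comm j l, mul_comm]
      rfl
    rw [h₁, h₂, eq_neg_iff_add_eq_zero, h]
  have hnil := Matrix.isNilpotent_of_derivation_eq_neg_sq D H hH
    (D.exists_iterate_eq_zero_of_apply_apply_X hDD)
  exact (Matrix.isNilpotent_trace_of_isNilpotent hnil).eq_zero

/-- Two real polynomials that are semiconformal (orthogonal gradients of equal length) are
harmonic. -/
theorem sum_pderiv_pderiv_eq_zero_of_semiconformal [Fintype σ] (p q : MvPolynomial σ ℝ)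
    (horth : ∑ i, pderiv i p * pderiv i q = 0)
    (hnorm : ∑ i, pderiv i p ^ 2 = ∑ i, pderiv i q ^ 2) :
    ∑ i, pderiv i (pderiv i p) = 0 := by
  let ι : MvPolynomial σ ℝ →+* MvPolynomial σ ℂ := map Complex.ofRealHom
  have hI : (C Complex.I : MvPolynomial σ ℂ) ^ 2 = -1 := by
    rw [← map_pow, Complex.I_sq]; simp
  have hP := sum_pderiv_pderiv_eq_zero_of_sum_sq (ι p + C Complex.I * ι q) (by
    have h : ∀ i, pderiv i (ι p + C Complex.I * ι q) ^ 2
        = ι (pderiv i p ^ 2) - ι (pderiv i q ^ 2)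
          + 2 * C Complex.I * ι (pderiv i p * pderiv i q) := by
      intro i
      simp only [ι, map_add, pderiv_C_mul, pderiv_map, map_pow, map_mul]
      linear_combination (map Complex.ofRealHom (pderiv i q)) ^ 2 * hI
    simp only [h, Finset.sum_add_distrib, Finset.sum_sub_distrib, ← Finset.mul_sum, ← map_sum,
      horth, hnorm]
    simp)
  refine MvPolynomial.funext fun x => ?_
  have h := congrArg (fun r => (eval (fun i => (x i : ℂ)) r).re) hP
  have hev : ∀ r : MvPolynomial σ ℝ, eval (fun i => (x i : ℂ)) (ι r) = (eval x r : ℂ) := by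
    intro r
    rw [eval_map]
    exact (eval₂_comp Complex.ofRealHom x r).symm
  simp only [map_add, pderiv_C_mul, ι, pderiv_map, map_sum, Finset.sum_add_distrib] at h
  simp only [map_sum, map_zero]
  simpa [ι, smul_eval, hev] using h

variable {m : ℕ}

theorem funext_euclidean {p q : MvPolynomial (Fin m) ℝ}
    (h : ∀ x : EuclideanSpace ℝ (Fin m), eval (fun i => x i) p = eval (fun i => x i) q) : p = q :=
  MvPolynomial.funext fun x => h (WithLp.toLp 2 x)

theorem hasFDerivAt_eval (p : MvPolynomial (Fin m) ℝ) (x : EuclideanSpace ℝ (Fin m)) :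
    HasFDerivAt (fun y : EuclideanSpace ℝ (Fin m) => eval (fun i => y i) p)
      (∑ i, eval (fun i => x i) (pderiv i p) •
        (EuclideanSpace.proj i : EuclideanSpace ℝ (Fin m) →L[ℝ] ℝ)) x := by
  induction p using MvPolynomial.induction_on with
  | C a => simpa using hasFDerivAt_const a x
  | add p q hp hq =>
    simp only [map_add]
    refine (hp.fun_add hq).congr_fderiv ?_
    simp only [add_smul, Finset.sum_add_distrib]
  | mul_X p l hp =>
    have hl : HasFDerivAt (fun y : EuclideanSpace ℝ (Fin m) => y l)
        (EuclideanSpace.proj l : EuclideanSpace ℝ (Fin m) →L[ℝ] ℝ) x :=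
      (EuclideanSpace.proj l : EuclideanSpace ℝ (Fin m) →L[ℝ] ℝ).hasFDerivAt
    simp only [map_mul, eval_X]
    refine (hp.fun_mul hl).congr_fderiv ?_
    ext w
    simp only [Derivation.leibniz, pderiv_X, Pi.single_apply, smul_eq_mul, mul_ite, mul_one,
      mul_zero, map_add, apply_ite (eval _), map_zero, map_mul, eval_X, add_smul,
      Finset.sum_add_distrib, mul_smul, Finset.smul_sum, ite_smul, zero_smul, Finset.sum_ite_eq,
      Finset.mem_univ, if_true]

theorem fderiv_eval_apply (p : MvPolynomial (Fin m) ℝ) (x w : EuclideanSpace ℝ (Fin m)) :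
    fderiv ℝ (fun y : EuclideanSpace ℝ (Fin m) => eval (fun i => y i) p) x w
      = ∑ i, eval (fun i => x i) (pderiv i p) * w i := by
  rw [(hasFDerivAt_eval p x).fderiv]
  simp

theorem fderiv_eval_single (p : MvPolynomial (Fin m) ℝ) (x : EuclideanSpace ℝ (Fin m))
    (i : Fin m) :
    fderiv ℝ (fun y : EuclideanSpace ℝ (Fin m) => eval (fun i => y i) p) x
      (EuclideanSpace.single i 1) = eval (fun i => x i) (pderiv i p) := by
  simp [fderiv_eval_apply]

theorem lap_eval (p : MvPolynomial (Fin m) ℝ) (x : EuclideanSpace ℝ (Fin m)) :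
    lap (fun y : EuclideanSpace ℝ (Fin m) => eval (fun i => y i) p) x
      = ∑ i, eval (fun i => x i) (pderiv i (pderiv i p)) := by
  simp only [lap, fderiv_eval_single]

theorem contDiff_eval (p : MvPolynomial (Fin m) ℝ) {r : WithTop ℕ∞} :
    ContDiff ℝ r (fun y : EuclideanSpace ℝ (Fin m) => eval (fun i => y i) p) := by
  induction p using MvPolynomial.induction_on with
  | C a => simpa using contDiff_const
  | add p q hp hq => simpa using hp.add hq
  | mul_X p l hp =>
    simpa using hp.mul (EuclideanSpace.proj l : EuclideanSpace ℝ (Fin m) →L[ℝ] ℝ).contDiff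

variable {n : ℕ} {φ : EuclideanSpace ℝ (Fin m) → EuclideanSpace ℝ (Fin n)}
  {p : Fin n → MvPolynomial (Fin m) ℝ}

theorem contDiff_of_apply_eq_eval (hφ : ∀ α x, φ x α = eval (fun i => x i) (p α))
    {r : WithTop ℕ∞} : ContDiff ℝ r φ := by
  rw [contDiff_euclidean]
  intro α
  simp only [hφ]
  exact contDiff_eval _

theorem fderiv_apply_of_apply_eq_eval (hφ : ∀ α x, φ x α = eval (fun i => x i) (p α))
    (x w : EuclideanSpace ℝ (Fin m)) (α : Fin n) :
    fderiv ℝ φ x w α = ∑ i, eval (fun i => x i) (pderiv i (p α)) * w i := by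
  have hd : HasFDerivAt φ (fderiv ℝ φ x) x :=
    ((contDiff_of_apply_eq_eval hφ (r := 1)).differentiable one_ne_zero x).hasFDerivAt
  have h := ((EuclideanSpace.proj α : EuclideanSpace ℝ (Fin n) →L[ℝ] ℝ).hasFDerivAt.comp x
    hd).fderiv
  rw [show ⇑(EuclideanSpace.proj α : EuclideanSpace ℝ (Fin n) →L[ℝ] ℝ) ∘ φ = fun y => φ y α
    from rfl] at h
  simp only [hφ] at h
  rw [← fderiv_eval_apply, h]
  rfl

end MvPolynomial

theorem EuclideanSpace.clm_apply_eq_sum {n : ℕ} (L : EuclideanSpace ℝ (Fin n) →L[ℝ] ℝ)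
    (w : EuclideanSpace ℝ (Fin n)) :
    L w = ∑ α, w α * L (EuclideanSpace.single α 1) := by
  have h := (EuclideanSpace.basisFun (Fin n) ℝ).sum_repr w
  conv_lhs => rw [← h]
  simp

open MvPolynomial in
/-- The Laplacian of the composition of a `C²` function with a polynomial map. -/
theorem lap_comp_polynomial {m n : ℕ} {φ : EuclideanSpace ℝ (Fin m) → EuclideanSpace ℝ (Fin n)}
    {p : Fin n → MvPolynomial (Fin m) ℝ} (hφ : ∀ α x, φ x α = eval (fun i => x i) (p α))
    {u : EuclideanSpace ℝ (Fin n) → ℝ} {x : EuclideanSpace ℝ (Fin m)}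
    (hu : ContDiffAt ℝ 2 u (φ x)) :
    lap (fun y => u (φ y)) x =
      (∑ α, ∑ β, eval (fun i => x i) (∑ i, pderiv i (p α) * pderiv i (p β)) *
        fderiv ℝ (fun z => fderiv ℝ u z (EuclideanSpace.single α 1)) (φ x)
          (EuclideanSpace.single β 1)) +
      ∑ α, eval (fun i => x i) (∑ i, pderiv i (pderiv i (p α))) *
        fderiv ℝ u (φ x) (EuclideanSpace.single α 1) := by
  have hφd : Differentiable ℝ φ := (contDiff_of_apply_eq_eval hφ (r := 1)).differentiable one_ne_zero
  have hsingle : ∀ (L : EuclideanSpace ℝ (Fin n) →L[ℝ] ℝ) (y : EuclideanSpace ℝ (Fin m))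
      (i : Fin m), L (fderiv ℝ φ y (EuclideanSpace.single i 1)) =
        ∑ β, eval (fun i => y i) (pderiv i (p β)) * L (EuclideanSpace.single β 1) := by
    intro L y i
    rw [EuclideanSpace.clm_apply_eq_sum]
    simp [fderiv_apply_of_apply_eq_eval hφ]
  have hfirst : ∀ i, (fun y => fderiv ℝ (fun y => u (φ y)) y (EuclideanSpace.single i 1))
      =ᶠ[nhds x] fun y => ∑ α, eval (fun i => y i) (pderiv i (p α)) *
        fderiv ℝ u (φ y) (EuclideanSpace.single α 1) := by
    intro i
    have hev := hφd.continuous.continuousAt.eventually (hu.eventually (by simp))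
    filter_upwards [hev] with y hy
    rw [← hsingle, fderiv_fun_comp y (hy.differentiableAt two_ne_zero) (hφd y)]
    rfl
  have hu' : ∀ α, DifferentiableAt ℝ
      (fun z => fderiv ℝ u z (EuclideanSpace.single α 1)) (φ x) := by
    intro α
    have h : ContDiffAt ℝ 1 (fderiv ℝ u) (φ x) := hu.fderiv_right (by norm_num)
    exact (h.differentiableAt one_ne_zero).clm_apply (differentiableAt_const _)
  have hsecond : ∀ i, fderiv ℝ (fun y => ∑ α, eval (fun i => y i) (pderiv i (p α)) *
        fderiv ℝ u (φ y) (EuclideanSpace.single α 1)) x (EuclideanSpace.single i 1) =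
      ∑ α, (∑ β, eval (fun i => x i) (pderiv i (p α) * pderiv i (p β)) *
        fderiv ℝ (fun z => fderiv ℝ u z (EuclideanSpace.single α 1)) (φ x)
          (EuclideanSpace.single β 1) +
        eval (fun i => x i) (pderiv i (pderiv i (p α))) *
          fderiv ℝ u (φ x) (EuclideanSpace.single α 1)) := by
    intro i
    have h : ∀ α ∈ Finset.univ, HasFDerivAt (fun y => eval (fun i => y i) (pderiv i (p α)) *
        fderiv ℝ u (φ y) (EuclideanSpace.single α 1)) _ x := fun α _ =>
      (hasFDerivAt_eval (pderiv i (p α)) x).differentiableAt.hasFDerivAt.fun_mul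
        ((hu' α).hasFDerivAt.comp x (hφd x).hasFDerivAt)
    rw [(HasFDerivAt.fun_sum h).fderiv, sum_apply]
    refine Finset.sum_congr rfl fun α _ => ?_
    simp only [add_apply, smul_apply,
      ContinuousLinearMap.comp_apply, hsingle, fderiv_eval_single, smul_eq_mul, map_mul,
      Finset.mul_sum, mul_assoc]
    rw [mul_comm (fderiv ℝ u (φ x) _)]
  simp only [lap, (hfirst _).fderiv_eq, hsecond, Finset.sum_add_distrib, map_sum, Finset.sum_mul]
  congr 1
  · rw [Finset.sum_comm]
    exact Finset.sum_congr rfl fun α _ => Finset.sum_comm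
  · exact Finset.sum_comm

open MvPolynomial in
/-- Composition with a semiconformal polynomial map with harmonic components preserves
harmonicity. -/
theorem lap_comp_eq_zero_of_semiconformal {m n : ℕ}
    {φ : EuclideanSpace ℝ (Fin m) → EuclideanSpace ℝ (Fin n)}
    {p : Fin n → MvPolynomial (Fin m) ℝ} (hφ : ∀ α x, φ x α = eval (fun i => x i) (p α))
    (horth : ∀ α β, α ≠ β → ∑ i, pderiv i (p α) * pderiv i (p β) = 0)
    (hnorm : ∀ α β, ∑ i, pderiv i (p α) ^ 2 = ∑ i, pderiv i (p β) ^ 2)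
    (hharm : ∀ α, ∑ i, pderiv i (pderiv i (p α)) = 0)
    {u : EuclideanSpace ℝ (Fin n) → ℝ} {x : EuclideanSpace ℝ (Fin m)}
    (hu : ContDiffAt ℝ 2 u (φ x)) (hlap : lap u (φ x) = 0) :
    lap (fun y => u (φ y)) x = 0 := by
  rw [lap_comp_polynomial hφ hu]
  simp only [hharm, map_zero, zero_mul, Finset.sum_const_zero, add_zero]
  rcases isEmpty_or_nonempty (Fin n) with _ | ⟨⟨γ⟩⟩
  · simp
  have h : ∀ α, ∑ β, eval (fun i => x i) (∑ i, pderiv i (p α) * pderiv i (p β)) *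
        fderiv ℝ (fun z => fderiv ℝ u z (EuclideanSpace.single α 1)) (φ x)
          (EuclideanSpace.single β 1) =
      eval (fun i => x i) (∑ i, pderiv i (p γ) ^ 2) *
        fderiv ℝ (fun z => fderiv ℝ u z (EuclideanSpace.single α 1)) (φ x)
          (EuclideanSpace.single α 1) := by
    intro α
    rw [Finset.sum_eq_single α]
    · simp only [← pow_two, hnorm α γ]
    · intro β _ hβ
      rw [horth α β hβ.symm, map_zero, zero_mul]
    · simp
  simp only [h, ← Finset.mul_sum]
  exact mul_eq_zero_of_right _ hlap

theorem inner_gradient_gradient {E : Type*} [NormedAddCommGroup E] [InnerProductSpace ℝ E]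
    [CompleteSpace E] (f g : E → ℝ) (x : E) :
    ⟪gradient f x, gradient g x⟫ = fderiv ℝ g x (gradient f x) := by
  rw [real_inner_comm, gradient, InnerProductSpace.toDual_symm_apply]

open MvPolynomial in
theorem stmt10 {m n : ℕ} (hn : 2 ≤ n) (hmn : n < m)
    (f : EuclideanSpace ℝ (Fin m) → ℝ) (hf : ContDiff ℝ (⊤ : ℕ∞) f)
    (hfpos : ∀ x, 0 < f x)
    (φ : EuclideanSpace ℝ (Fin m) → EuclideanSpace ℝ (Fin n))
    -- each component of `φ` is a polynomial
    (hpoly : ∀ α : Fin n, ∃ p : MvPolynomial (Fin m) ℝ,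
      ∀ x, φ x α = MvPolynomial.eval (fun i => x i) p) :
    -- `φ` is an `f`-harmonic morphism ...
    (∀ V : Set (EuclideanSpace ℝ (Fin n)), IsOpen V →
      ∀ u : EuclideanSpace ℝ (Fin n) → ℝ, ContDiffOn ℝ 2 u V →
      (∀ y ∈ V, lap u y = 0) →
      (φ ⁻¹' V).Nonempty →
      ∀ x ∈ φ ⁻¹' V,
        f x * lap (fun y => u (φ y)) x +
          ⟪gradient f x, gradient (fun y => u (φ y)) x⟫ = 0) ↔
    -- ... iff `φ` is a harmonic morphism and the gradient of `f` is vertical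
    ((∀ V : Set (EuclideanSpace ℝ (Fin n)), IsOpen V →
      ∀ u : EuclideanSpace ℝ (Fin n) → ℝ, ContDiffOn ℝ 2 u V →
      (∀ y ∈ V, lap u y = 0) →
      (φ ⁻¹' V).Nonempty →
      ∀ x ∈ φ ⁻¹' V, lap (fun y => u (φ y)) x = 0) ∧
      ∀ x, fderiv ℝ φ x (gradient f x) = 0) := by
  classical
  choose p hφ using hpoly
  have hφd : Differentiable ℝ φ :=
    (MvPolynomial.contDiff_of_apply_eq_eval hφ (r := 1)).differentiable one_ne_zero
  constructor
  · intro h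
    have hT : ∀ q : MvPolynomial (Fin n) ℝ, (∑ α, pderiv α (pderiv α q) = 0) → ∀ x,
        f x * eval (fun i => x i) (∑ i, pderiv i (pderiv i (bind₁ p q))) +
          ∑ i, eval (fun i => x i) (pderiv i (bind₁ p q)) * gradient f x i = 0 := by
      intro q hq x
      have hx := h Set.univ isOpen_univ (fun y => eval (fun α => y α) q)
        (contDiff_eval q).contDiffOn
        (fun y _ => by rw [lap_eval, ← map_sum, hq, map_zero]) ⟨x, trivial⟩ x trivial
      have hcomp : (fun y => eval (fun α => φ y α) q) =
          fun y : EuclideanSpace ℝ (Fin m) => eval (fun i => y i) (bind₁ p q) := by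
        funext y
        simp only [hφ]
        exact (eval₂Hom_bind₁ (RingHom.id ℝ) (fun i => y i) p q).symm
      rwa [hcomp, lap_eval, ← map_sum, inner_gradient_gradient, fderiv_eval_apply] at hx
    have hlin : ∀ α x, f x * eval (fun i => x i) (∑ i, pderiv i (pderiv i (p α))) +
          ∑ i, eval (fun i => x i) (pderiv i (p α)) * gradient f x i = 0 := by
      intro α x
      have hX := hT (X α) (by simp [pderiv_X, Pi.single_apply, apply_ite]) x
      rwa [bind₁_X_right] at hX
    have hmul : ∀ (a b : MvPolynomial (Fin m) ℝ) (x : EuclideanSpace ℝ (Fin m)),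
        f x * eval (fun i => x i) (∑ i, pderiv i (pderiv i (a * b))) +
          ∑ i, eval (fun i => x i) (pderiv i (a * b)) * gradient f x i =
        eval (fun i => x i) a * (f x * eval (fun i => x i) (∑ i, pderiv i (pderiv i b)) +
          ∑ i, eval (fun i => x i) (pderiv i b) * gradient f x i) +
        eval (fun i => x i) b * (f x * eval (fun i => x i) (∑ i, pderiv i (pderiv i a)) +
          ∑ i, eval (fun i => x i) (pderiv i a) * gradient f x i) +
        2 * f x * eval (fun i => x i) (∑ i, pderiv i a * pderiv i b) := by
      intro a b x
      simp only [map_sum, mul_add, Finset.mul_sum, ← Finset.sum_add_distrib]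
      refine Finset.sum_congr rfl fun i _ => ?_
      simp only [Derivation.leibniz, smul_eq_mul, map_add, map_mul]
      ring
    have horth : ∀ α β, α ≠ β → ∑ i, pderiv i (p α) * pderiv i (p β) = 0 := by
      intro α β hαβ
      refine funext_euclidean fun x => ?_
      have hX := hT (X α * X β) (by
        refine Finset.sum_eq_zero fun γ _ => ?_
        rcases eq_or_ne γ α with rfl | hγ
        · simp [pderiv_X_of_ne hαβ.symm]
        · simp [pderiv_X_of_ne hγ.symm, pderiv_X, Pi.single_apply, apply_ite]) x
      rw [map_mul, bind₁_X_right, bind₁_X_right, hmul, hlin, hlin, mul_zero, mul_zero, zero_add,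
        zero_add] at hX
      simpa [(hfpos x).ne'] using hX
    have hnorm : ∀ α β, ∑ i, pderiv i (p α) ^ 2 = ∑ i, pderiv i (p β) ^ 2 := by
      intro α β
      refine funext_euclidean fun x => ?_
      have hsq : ∀ γ : Fin n, ∑ δ, pderiv δ (pderiv δ (X γ * X γ : MvPolynomial (Fin n) ℝ)) = 2 := by
        intro γ
        rw [Finset.sum_eq_single γ]
        · simp; norm_num
        · intro δ _ hδ
          simp [pderiv_X_of_ne hδ.symm]
        · simp
      have hX := hT (X α * X α - X β * X β) (by
        simp only [map_sub, Finset.sum_sub_distrib, hsq, sub_self]) x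
      have hα := hmul (p α) (p α) x
      have hβ := hmul (p β) (p β) x
      rw [hlin, mul_zero, zero_add, zero_add] at hα hβ
      simp only [map_sub, map_mul (bind₁ p), bind₁_X_right, Finset.sum_sub_distrib, sub_mul] at hX
      simp only [pow_two]
      have h2 : 2 * f x ≠ 0 := mul_ne_zero two_ne_zero (hfpos x).ne'
      refine mul_left_cancel₀ h2 ?_
      linear_combination hX - hα + hβ
    have hharm : ∀ α, ∑ i, pderiv i (pderiv i (p α)) = 0 := by
      intro α
      have : Nontrivial (Fin n) := Fin.nontrivial_iff_two_le.2 hn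
      obtain ⟨β, hβ⟩ := exists_ne α
      exact sum_pderiv_pderiv_eq_zero_of_semiconformal (p α) (p β) (horth α β hβ.symm)
        (hnorm α β)
    refine ⟨fun V hV u hu hlap _ x hx => ?_, fun x => ?_⟩
    · exact lap_comp_eq_zero_of_semiconformal hφ horth hnorm hharm
        (hu.contDiffAt (hV.mem_nhds hx)) (hlap _ hx)
    · ext α
      rw [fderiv_apply_of_apply_eq_eval hφ]
      simpa [hharm] using hlin α x
  · rintro ⟨h, hvert⟩ V hV u hu hlap hne x hx
    have hux : DifferentiableAt ℝ u (φ x) :=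
      (hu.contDiffAt (hV.mem_nhds hx)).differentiableAt two_ne_zero
    rw [h V hV u hu hlap hne x hx, inner_gradient_gradient, fderiv_fun_comp x hux (hφd x),
      ContinuousLinearMap.comp_apply, hvert]
    simp
end
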